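/- arXiv:1812.06911 — 2 statements merged into one kernel-verified Lean document; each statement's English description precedes it below -/
import Mathlib

section
/- For every u₀ ∈ L¹(Ω) there exists a unique solution u of the nonlocal Dirichlet problem with data (u₀, g) on [0,T] for every T > 0; that is, there is a unique measurable u : G × [0,∞) → ℝ with u(x,t) = g(x,t) for x ∉ Ω and all t ≥ 0, t ↦ u(·,t)|_Ω continuous from [0,∞) into L¹(Ω), and u(x,t) = u₀(x) + ∫₀ᵗ ∫_G K(x,y)(u(y,s) − u(x,s)) dμ(y) ds for almost every x ∈ Ω and every t ≥ 0. -/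
open MeasureTheory Set

/-- `u` is a solution of the nonlocal Dirichlet problem with data `(u₀, g)` on `[0,∞)`:
measurable, equal to `g` off `Ω`, `t ↦ u(·,t)|_Ω` continuous from `[0,∞)` into `L¹(Ω)`,
and satisfying the integral equation for a.e. `x ∈ Ω` and every `t ≥ 0`. -/
def IsNonlocalSolution {G : Type*} [MeasurableSpace G] (μ : Measure G) (Ω : Set G)
    (K : G → G → ℝ) (g : G → ℝ → ℝ) (u₀ : G → ℝ) (u : G → ℝ → ℝ) : Prop :=
  Measurable (fun p : G × ℝ => u p.1 p.2) ∧
  (∀ x ∉ Ω, ∀ t, 0 ≤ t → u x t = g x t) ∧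
  (∀ t, 0 ≤ t → IntegrableOn (fun x => u x t) Ω μ) ∧
  (∀ s, 0 ≤ s →
    Filter.Tendsto (fun t => ∫ x in Ω, |u x t - u x s| ∂μ)
      (nhdsWithin s (Ici (0:ℝ))) (nhds 0)) ∧
  (∀ t, 0 ≤ t →
    ∀ᵐ x ∂μ.restrict Ω,
      u x t = u₀ x + ∫ s in (0:ℝ)..t, ∫ y, K x y * (u y s - u x s) ∂μ)

noncomputable def nlB {G : Type*} [MeasurableSpace G] (ν : Measure G) (K : G → G → ℝ)
    (w : G → ℝ → ℝ) (x : G) (s : ℝ) : ℝ := ∫ y, K x y * (w y s - w x s) ∂ν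

lemma nlB_meas {G : Type*} [MeasurableSpace G] (ν : Measure G) [SFinite ν] (K : G → G → ℝ)
    (hK : Measurable (fun p : G × G => K p.1 p.2)) (w : G → ℝ → ℝ)
    (hw : Measurable (fun p : G × ℝ => w p.1 p.2)) :
    Measurable (fun p : G × ℝ => nlB ν K w p.1 p.2) := by
  have h1 : Measurable (fun q : (G × ℝ) × G => K q.1.1 q.2 * (w q.2 q.1.2 - w q.1.1 q.1.2)) := by
    have a := hK.comp (g := fun p : G × G => K p.1 p.2)
      (f := fun q : (G × ℝ) × G => (q.1.1, q.2)) (by fun_prop)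
    have b := hw.comp (g := fun p : G × ℝ => w p.1 p.2)
      (f := fun q : (G × ℝ) × G => (q.2, q.1.2)) (by fun_prop)
    have c := hw.comp (g := fun p : G × ℝ => w p.1 p.2)
      (f := fun q : (G × ℝ) × G => (q.1.1, q.1.2)) (by fun_prop)
    exact a.mul (b.sub c)
  exact (h1.stronglyMeasurable.integral_prod_right (ν := ν)).measurable

lemma nl_prim_meas {G : Type*} [MeasurableSpace G] (b : G → ℝ → ℝ)
    (hb : Measurable (fun p : G × ℝ => b p.1 p.2)) :
    Measurable (fun p : G × ℝ => ∫ s in Ioc 0 p.2, b p.1 s) := by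
  have h1 : Measurable (fun q : (G × ℝ) × ℝ =>
      ({q : (G × ℝ) × ℝ | 0 < q.2 ∧ q.2 ≤ q.1.2}).indicator (fun q => b q.1.1 q.2) q) := by
    refine Measurable.indicator ?_ ?_
    · exact hb.comp (g := fun p : G × ℝ => b p.1 p.2)
        (f := fun q : (G × ℝ) × ℝ => (q.1.1, q.2)) (by fun_prop)
    · exact (measurableSet_lt measurable_const measurable_snd).inter
        (measurableSet_le measurable_snd (by fun_prop))
  have h2 := (StronglyMeasurable.integral_prod_right (ν := (volume : Measure ℝ))
    (f := fun (p : G × ℝ) (s : ℝ) => ({q : (G × ℝ) × ℝ | 0 < q.2 ∧ q.2 ≤ q.1.2}).indicator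
      (fun q => b q.1.1 q.2) (p, s)) h1.stronglyMeasurable).measurable
  convert h2 using 2 with p
  rw [← integral_indicator measurableSet_Ioc]
  rfl

lemma nlB_bound {G : Type*} [MeasurableSpace G] (ν : Measure G) [IsFiniteMeasure ν]
    (K : G → G → ℝ)
    (hK0 : ∀ x y, 0 ≤ K x y) (M : ℝ) (hKM : ∀ x y, K x y ≤ M)
    (w : G → ℝ → ℝ) (x : G) (s : ℝ) (φ : G → ℝ)
    (hw : ∀ y, |w y s| ≤ φ y) (hφ : Integrable φ ν) :
    |nlB ν K w x s| ≤ M * ∫ y, φ y ∂ν + M * ν.real univ * φ x := by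
  have h1 : |nlB ν K w x s| ≤ ∫ y, M * (φ y + φ x) ∂ν := by
    refine norm_integral_le_of_norm_le (f := fun y => K x y * (w y s - w x s)) ?_ ?_
    · exact (hφ.add (integrable_const _)).const_mul M
    · refine Filter.Eventually.of_forall fun y => ?_
      rw [norm_mul, Real.norm_eq_abs, Real.norm_eq_abs, abs_of_nonneg (hK0 x y)]
      have := abs_sub (w y s) (w x s)
      exact mul_le_mul (hKM x y) (by linarith [hw x, hw y]) (abs_nonneg _)
        ((hK0 x y).trans (hKM x y))
  refine h1.trans_eq ?_
  rw [integral_const_mul, integral_add hφ (integrable_const _), integral_const]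
  simp only [smul_eq_mul]; ring

lemma nlB_sub {G : Type*} [MeasurableSpace G] (ν : Measure G) [IsFiniteMeasure ν]
    (K : G → G → ℝ) (hK : Measurable (fun p : G × G => K p.1 p.2))
    (hK0 : ∀ x y, 0 ≤ K x y) (M : ℝ) (hKM : ∀ x y, K x y ≤ M)
    (w v : G → ℝ → ℝ) (x : G) (s : ℝ)
    (hw : Integrable (fun y => w y s) ν) (hv : Integrable (fun y => v y s) ν) :
    nlB ν K (fun y s => w y s - v y s) x s = nlB ν K w x s - nlB ν K v x s := by
  have key : ∀ w : G → ℝ → ℝ, Integrable (fun y => w y s) ν →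
      Integrable (fun y => K x y * (w y s - w x s)) ν := by
    intro w hw
    refine (hw.sub (integrable_const (w x s))).bdd_mul (c := M) ?_ ?_
    · exact (hK.comp (g := fun p : G × G => K p.1 p.2) (f := fun y => (x, y))
        (by fun_prop)).aestronglyMeasurable
    · refine Filter.Eventually.of_forall fun y => ?_
      rw [Real.norm_eq_abs, abs_of_nonneg (hK0 x y)]; exact hKM x y
  unfold nlB
  rw [← integral_sub (key w hw) (key v hv)]
  congr 1; ext y; ring

noncomputable def nlT {G : Type*} [MeasurableSpace G] (ν : Measure G) (Ω : Set G)
    (K : G → G → ℝ) (g : G → ℝ → ℝ) (v : G → ℝ) (w : G → ℝ → ℝ) (x : G) (t : ℝ) : ℝ :=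
  open Classical in
  if x ∈ Ω ∧ 0 ≤ t then v x + ∫ s in Ioc 0 t, nlB ν K w x s else g x t

lemma nlT_meas {G : Type*} [MeasurableSpace G] (ν : Measure G) [SFinite ν] (Ω : Set G)
    (hΩ : MeasurableSet Ω)
    (K : G → G → ℝ) (hK : Measurable (fun p : G × G => K p.1 p.2))
    (g : G → ℝ → ℝ) (hg : Measurable (fun p : G × ℝ => g p.1 p.2))
    (v : G → ℝ) (hv : Measurable v) (w : G → ℝ → ℝ)
    (hw : Measurable (fun p : G × ℝ => w p.1 p.2)) :
    Measurable (fun p : G × ℝ => nlT ν Ω K g v w p.1 p.2) := by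
  unfold nlT
  refine Measurable.ite ?_ ?_ hg
  · exact (measurable_fst hΩ).inter (measurableSet_le measurable_const measurable_snd)
  · exact (hv.comp measurable_fst).add (nl_prim_meas _ (nlB_meas ν K hK w hw))

lemma nl_exp_int (l t : ℝ) (hl : 0 < l) (ht : 0 ≤ t) :
    ∫ s in Ioc 0 t, Real.exp (l * s) ≤ Real.exp (l * t) / l := by
  rw [← intervalIntegral.integral_of_le ht,
    intervalIntegral.integral_eq_sub_of_hasDerivAt (f := fun s => Real.exp (l * s) / l)]
  · have : 0 < Real.exp (l * 0) / l := by positivity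
    linarith
  · intro s _
    have := (((hasDerivAt_id s).const_mul l).exp).div_const l
    rw [mul_one, mul_div_assoc, div_self hl.ne', mul_one] at this
    exact this
  · exact Continuous.intervalIntegrable (by fun_prop) _ _

/-- time integrability of `nlB` under the weighted bound -/
lemma nlB_int {G : Type*} [MeasurableSpace G] (ν : Measure G) [IsFiniteMeasure ν]
    (K : G → G → ℝ) (hK : Measurable (fun p : G × G => K p.1 p.2))
    (hK0 : ∀ x y, 0 ≤ K x y) (M : ℝ) (hKM : ∀ x y, K x y ≤ M)
    (h : G → ℝ) (hh : Integrable h ν) (h1 : ∀ x, 1 ≤ h x) (l : ℝ) 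
    (w : G → ℝ → ℝ) (hw : Measurable (fun p : G × ℝ => w p.1 p.2))
    (A : ℝ) (hA : ∀ x t, 0 ≤ t → |w x t| ≤ A * h x * Real.exp (l * t)) :
    (∀ x s, 0 ≤ s → |nlB ν K w x s| ≤ 
      (M * ((∫ y, h y ∂ν) + ν.real univ)) * A * h x * Real.exp (l * s)) ∧
    ∀ x a t, 0 ≤ a → IntegrableOn (fun s => nlB ν K w x s) (Ioc a t) := by
  have hb : ∀ x s, 0 ≤ s → |nlB ν K w x s| ≤ 
      (M * ((∫ y, h y ∂ν) + ν.real univ)) * A * h x * Real.exp (l * s) := by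
    intro x s hs
    have hA0 : 0 ≤ A := by
      have := (abs_nonneg _).trans (hA x s hs)
      by_contra hc
      have h2 : A * h x < 0 := mul_neg_of_neg_of_pos (by linarith) (by linarith [h1 x])
      have := mul_neg_of_neg_of_pos h2 (Real.exp_pos (l * s))
      linarith
    have hM0 : 0 ≤ M := (hK0 x x).trans (hKM x x)
    have := nlB_bound ν K hK0 M hKM w x s (fun y => A * h y * Real.exp (l * s))
      (fun y => hA y s hs) ((hh.const_mul A).mul_const _)
    rw [integral_mul_const, integral_const_mul] at this
    refine this.trans ?_
    have hI : 0 ≤ ∫ y, h y ∂ν := integral_nonneg fun y => by simpa using zero_le_one.trans (h1 y)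
    have : 0 ≤ M * (∫ y, h y ∂ν) * A * Real.exp (l * s) * (h x - 1) := 
      mul_nonneg (by positivity) (by linarith [h1 x])
    nlinarith
  refine ⟨hb, fun x a t ha => ?_⟩
  have hm : Measurable (fun s => nlB ν K w x s) :=
    (nlB_meas ν K hK w hw).comp (g := fun p : G × ℝ => nlB ν K w p.1 p.2)
      (f := fun s => (x, s)) (by fun_prop)
  have hc : IntegrableOn (fun s => (M * ((∫ y, h y ∂ν) + ν.real univ)) * A * h x * Real.exp (l * s))
      (Ioc a t) := by
    refine (Continuous.integrableOn_Icc (by fun_prop)).mono_set Ioc_subset_Icc_self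
  refine hc.mono' hm.aestronglyMeasurable ?_
  refine (ae_restrict_mem measurableSet_Ioc).mono fun s hs => hb x s (ha.trans hs.1.le)

lemma nlT_contr {G : Type*} [MeasurableSpace G] (ν : Measure G) [IsFiniteMeasure ν]
    (Ω : Set G)
    (K : G → G → ℝ) (hK : Measurable (fun p : G × G => K p.1 p.2))
    (hK0 : ∀ x y, 0 ≤ K x y) (M : ℝ) (hKM : ∀ x y, K x y ≤ M)
    (h : G → ℝ) (hh : Integrable h ν) (h1 : ∀ x, 1 ≤ h x) (l : ℝ) (hl : 0 < l)
    (hlC : 2 * (M * ((∫ y, h y ∂ν) + ν.real univ)) ≤ l)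
    (g : G → ℝ → ℝ) (v : G → ℝ)
    (w : G → ℝ → ℝ) (hw : Measurable (fun p : G × ℝ => w p.1 p.2))
    (A : ℝ) (hA : ∀ x t, 0 ≤ t → |w x t| ≤ A * h x * Real.exp (l * t))
    (w' : G → ℝ → ℝ) (hw' : Measurable (fun p : G × ℝ => w' p.1 p.2))
    (A' : ℝ) (hA' : ∀ x t, 0 ≤ t → |w' x t| ≤ A' * h x * Real.exp (l * t))
    (D : ℝ) (hD0 : 0 ≤ D)
    (hD : ∀ x t, 0 ≤ t → |w x t - w' x t| ≤ D * h x * Real.exp (l * t)) :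
    ∀ x t, 0 ≤ t → |nlT ν Ω K g v w x t - nlT ν Ω K g v w' x t| ≤ D / 2 * h x * Real.exp (l * t) := by
  intro x t ht
  have hpos : 0 < h x := by linarith [h1 x]
  by_cases hx : x ∈ Ω
  swap
  · simp only [nlT, hx, false_and, if_false, sub_self, abs_zero]; positivity
  simp only [nlT, hx, ht, and_self, if_true, add_sub_add_left_eq_sub]
  have I := (nlB_int ν K hK hK0 M hKM h hh h1 l w hw A hA).2 x 0 t le_rfl
  have I' := (nlB_int ν K hK hK0 M hKM h hh h1 l w' hw' A' hA').2 x 0 t le_rfl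
  have hd := (nlB_int ν K hK hK0 M hKM h hh h1 l (fun y s => w y s - w' y s)
    (hw.sub hw') D hD).1 x
  rw [← integral_sub I I']
  have slice : ∀ (w : G → ℝ → ℝ) (A : ℝ), Measurable (fun p : G × ℝ => w p.1 p.2) →
      (∀ x t, 0 ≤ t → |w x t| ≤ A * h x * Real.exp (l * t)) → ∀ s, 0 ≤ s →
      Integrable (fun y => w y s) ν := by
    intro w A hw hA s hs
    refine ((hh.const_mul A).mul_const (Real.exp (l * s))).mono' ?_
      (Filter.Eventually.of_forall fun y => hA y s hs)
    exact (hw.comp (g := fun p : G × ℝ => w p.1 p.2)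
      (f := fun y => (y, s)) (by fun_prop)).aestronglyMeasurable
  set C := M * ((∫ y, h y ∂ν) + ν.real univ) with hC
  have hstep : |∫ s in Ioc 0 t, (nlB ν K w x s - nlB ν K w' x s)| ≤
      ∫ s in Ioc 0 t, C * D * h x * Real.exp (l * s) := by
    rw [← Real.norm_eq_abs]
    refine norm_integral_le_of_norm_le ?_ ?_
    · exact (Continuous.integrableOn_Icc (by fun_prop)).mono_set Ioc_subset_Icc_self
    · refine (ae_restrict_mem measurableSet_Ioc).mono fun s hs => ?_
      rw [← nlB_sub ν K hK hK0 M hKM w w' x s (slice w A hw hA s hs.1.le)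
        (slice w' A' hw' hA' s hs.1.le)]
      exact hd s hs.1.le
  refine hstep.trans ?_
  rw [integral_const_mul]
  have hC0 : 0 ≤ C := by
    have hI : 0 ≤ ∫ y, h y ∂ν := integral_nonneg fun y => by simpa using zero_le_one.trans (h1 y)
    have hM0 : 0 ≤ M := (hK0 x x).trans (hKM x x)
    positivity
  calc C * D * h x * ∫ s in Ioc 0 t, Real.exp (l * s) 
      ≤ C * D * h x * (Real.exp (l * t) / l) :=
        mul_le_mul_of_nonneg_left (nl_exp_int l t hl ht) (by positivity)
    _ = (C / l) * (D * h x * Real.exp (l * t)) := by ring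
    _ ≤ (1 / 2) * (D * h x * Real.exp (l * t)) := by
        refine mul_le_mul_of_nonneg_right ?_ (by positivity)
        rw [div_le_div_iff₀ hl (by norm_num)]; linarith
    _ = _ := by ring

lemma nlT_fix {G : Type*} [MeasurableSpace G] (ν : Measure G) [IsFiniteMeasure ν]
    (Ω : Set G) (hΩ : MeasurableSet Ω)
    (K : G → G → ℝ) (hK : Measurable (fun p : G × G => K p.1 p.2))
    (hK0 : ∀ x y, 0 ≤ K x y) (M : ℝ) (hKM : ∀ x y, K x y ≤ M)
    (h : G → ℝ) (hh : Integrable h ν) (h1 : ∀ x, 1 ≤ h x) (l : ℝ) (hl : 0 < l)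
    (hlC : 2 * (M * ((∫ y, h y ∂ν) + ν.real univ)) ≤ l)
    (g : G → ℝ → ℝ) (hg : Measurable (fun p : G × ℝ => g p.1 p.2)) (v : G → ℝ)
    (hv : Measurable v) (hvh : ∀ x, |v x| ≤ h x) (hgh : ∀ x t, |g x t| ≤ h x) :
    ∃ u : G → ℝ → ℝ, Measurable (fun p : G × ℝ => u p.1 p.2) ∧
      (∃ A, ∀ x t, 0 ≤ t → |u x t| ≤ A * h x * Real.exp (l * t)) ∧
      ∀ x t, u x t = nlT ν Ω K g v u x t := by
  let T := nlT ν Ω K g v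
  let U : ℕ → G → ℝ → ℝ := fun n => T^[n] (fun _ _ => 0)
  have hU : ∀ n, U (n+1) = T (U n) := fun n => Function.iterate_succ_apply' _ _ _
  have hU0 : ∀ x t, U 0 x t = 0 := fun x t => rfl
  have hUm : ∀ n, Measurable (fun p : G × ℝ => U n p.1 p.2) := by
    intro n
    induction n with
    | zero => exact measurable_const
    | succ n ih => rw [hU]; exact nlT_meas ν Ω hΩ K hK g hg v hv _ ih
  have hw : ∀ x t, 0 ≤ t → h x ≤ 1 * h x * Real.exp (l * t) := by
    intro x t ht
    have := Real.one_le_exp (mul_nonneg hl.le ht)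
    nlinarith [h1 x]
  have hU1 : ∀ x t, 0 ≤ t → |U 1 x t| ≤ 1 * h x * Real.exp (l * t) := by
    intro x t ht
    refine le_trans ?_ (hw x t ht)
    rw [hU]
    have : ∀ s, nlB ν K (U 0) x s = 0 := by intro s; simp [nlB, hU0]
    simp only [T, nlT, this]
    split_ifs
    · simpa using hvh x
    · exact hgh x t
  -- joint induction
  have main : ∀ n, (∃ A, ∀ x t, 0 ≤ t → |U n x t| ≤ A * h x * Real.exp (l * t)) ∧
      ∀ x t, 0 ≤ t → |U (n+1) x t - U n x t| ≤ (1/2)^n * h x * Real.exp (l * t) := by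
    intro n
    induction n with
    | zero => 
      refine ⟨⟨0, fun x t _ => by simp [hU0]⟩, fun x t ht => ?_⟩
      simpa [hU0] using hU1 x t ht
    | succ n ih =>
      obtain ⟨⟨A, hA⟩, hD⟩ := ih
      have hA' : ∀ x t, 0 ≤ t → |U (n+1) x t| ≤ (A + (1/2)^n) * h x * Real.exp (l * t) := by
        intro x t ht
        have := abs_sub_abs_le_abs_sub (U (n+1) x t) (U n x t)
        nlinarith [hA x t ht, hD x t ht]
      refine ⟨⟨_, hA'⟩, fun x t ht => ?_⟩
      have := nlT_contr ν Ω K hK hK0 M hKM h hh h1 l hl hlC g v (U (n+1)) (hUm _) _ hA'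
        (U n) (hUm _) A hA ((1/2)^n) (by positivity) hD x t ht
      rw [hU (n+1)]
      nth_rewrite 2 [hU n]
      convert this using 3
      ring
  have hneg : ∀ n x t, ¬ 0 ≤ t → U (n+1) x t = g x t := by
    intro n x t ht; rw [hU]; simp [T, nlT, ht]
  have hlim : ∀ x t, ∃ a, Filter.Tendsto (fun n => U n x t) Filter.atTop (nhds a) := by
    intro x t
    by_cases ht : 0 ≤ t
    · refine cauchySeq_tendsto_of_complete (cauchySeq_of_le_geometric (1/2)
        (h x * Real.exp (l * t)) (by norm_num) fun n => ?_)
      rw [dist_comm, Real.dist_eq]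
      refine ((main n).2 x t ht).trans_eq (by ring)
    · refine ⟨g x t, ?_⟩
      rw [← Filter.tendsto_add_atTop_iff_nat 1]
      simp only [hneg _ x t ht]
      exact tendsto_const_nhds
  choose u hu using hlim
  have hum : Measurable (fun p : G × ℝ => u p.1 p.2) :=
    measurable_of_tendsto_metrizable hUm (tendsto_pi_nhds.2 fun p => hu p.1 p.2)
  have hdist : ∀ n x t, 0 ≤ t → |u x t - U n x t| ≤ (2 * (1/2)^n) * h x * Real.exp (l * t) := by
    intro n x t ht
    have := dist_le_of_le_geometric_of_tendsto (1/2) (h x * Real.exp (l * t)) (by norm_num)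
      (f := fun n => U n x t) (fun n => by
        rw [dist_comm, Real.dist_eq]
        refine ((main n).2 x t ht).trans_eq (by ring)) (hu x t) n
    rw [dist_comm, Real.dist_eq] at this
    refine this.trans_eq (by ring)
  have huA : ∀ x t, 0 ≤ t → |u x t| ≤ 2 * h x * Real.exp (l * t) := by
    intro x t ht
    simpa [hU0] using hdist 0 x t ht
  refine ⟨u, hum, ⟨2, huA⟩, fun x t => ?_⟩
  by_cases ht : 0 ≤ t
  · refine tendsto_nhds_unique ((Filter.tendsto_add_atTop_iff_nat 1).2 (hu x t)) ?_
    rw [tendsto_iff_dist_tendsto_zero]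
    have hz : Filter.Tendsto (fun n : ℕ => (2 * (1/2:ℝ)^n)/2 * h x * Real.exp (l * t))
        Filter.atTop (nhds 0) := by
      have := ((tendsto_pow_atTop_nhds_zero_of_lt_one (r := (1/2:ℝ)) (by norm_num)
        (by norm_num)).mul_const (h x * Real.exp (l * t)))
      rw [zero_mul] at this
      refine this.congr fun n => by ring
    refine squeeze_zero (fun _ => dist_nonneg) (fun n => ?_) hz
    obtain ⟨A, hA⟩ := (main n).1
    rw [dist_comm, Real.dist_eq, hU]
    exact nlT_contr ν Ω K hK hK0 M hKM h hh h1 l hl hlC g v u hum _ huA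
        (U n) (hUm _) A hA _ (by positivity) (hdist n) x t ht
  · have : u x t = g x t := tendsto_nhds_unique ((Filter.tendsto_add_atTop_iff_nat 1).2 (hu x t)) 
      (by simp only [hneg _ x t ht]; exact tendsto_const_nhds)
    rw [this]; simp [nlT, ht]

lemma nl_split {G : Type*} [MeasurableSpace G] (μ : Measure G) (Ω F' : Set G)
    (hΩm : MeasurableSet Ω) (hF'fin : μ F' < ⊤) (f : G → ℝ) (hf : Measurable f)
    (hf0 : ∀ x, 0 ≤ f x) (hfi : IntegrableOn f Ω μ) (c : ℝ) (hc : 0 ≤ c)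
    (hfc : ∀ x ∉ Ω, f x ≤ c) :
    Integrable f (μ.restrict F') ∧
      ∫ x, f x ∂(μ.restrict F') ≤ ∫ x in Ω, f x ∂μ + c * μ.real F' := by
  have : IsFiniteMeasure (μ.restrict F') := ⟨by simpa using hF'fin⟩
  have hi : Integrable (Ω.indicator f) μ := (integrable_indicator_iff hΩm).2 hfi
  have hi' : Integrable (Ω.indicator f) (μ.restrict F') := hi.restrict
  have hle : ∀ x, f x ≤ Ω.indicator f x + c := by
    intro x
    by_cases hx : x ∈ Ω
    · simp [hx, hc]
    · simpa [hx] using hfc x hx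
  have hfI : Integrable f (μ.restrict F') := by
    refine (hi'.add (integrable_const c)).mono' hf.aestronglyMeasurable
      (Filter.Eventually.of_forall fun x => ?_)
    rw [Real.norm_eq_abs, abs_of_nonneg (hf0 x)]; exact hle x
  refine ⟨hfI, ?_⟩
  calc ∫ x, f x ∂(μ.restrict F') ≤ ∫ x, (Ω.indicator f x + c) ∂(μ.restrict F') :=
        integral_mono hfI (hi'.add (integrable_const c)) hle
    _ = ∫ x in F', Ω.indicator f x ∂μ + c * μ.real F' := by
        rw [integral_add hi' (integrable_const c), integral_const]
        simp [mul_comm]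
    _ ≤ ∫ x, Ω.indicator f x ∂μ + c * μ.real F' := by
        refine add_le_add_left ?_ _
        exact setIntegral_le_integral hi
          (Filter.Eventually.of_forall fun x => indicator_nonneg (fun y _ => hf0 y) x)
    _ = _ := by rw [integral_indicator hΩm]

lemma nl_L1cont {G : Type*} [MeasurableSpace G] (ρ : Measure G) (w : G → ℝ → ℝ)
    (hi : ∀ t, 0 ≤ t → Integrable (fun x => w x t) ρ)
    (hc : ∀ s, 0 ≤ s → Filter.Tendsto (fun t => ∫ x, |w x t - w x s| ∂ρ)
      (nhdsWithin s (Ici (0:ℝ))) (nhds 0)) :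
    ContinuousOn (fun t => ∫ x, |w x t| ∂ρ) (Ici 0) := by
  intro s hs
  unfold ContinuousWithinAt
  rw [tendsto_iff_dist_tendsto_zero]
  refine squeeze_zero' (Filter.Eventually.of_forall fun _ => dist_nonneg) ?_ (hc s hs)
  filter_upwards [self_mem_nhdsWithin] with t ht
  rw [Real.dist_eq, ← integral_sub (hi t ht).abs (hi s hs).abs]
  refine abs_integral_le_integral_abs.trans ?_
  exact integral_mono ((hi t ht).abs.sub (hi s hs).abs).abs ((hi t ht).sub (hi s hs)).abs
    fun x => abs_abs_sub_abs_le _ _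

lemma nl_prodint {G : Type*} [MeasurableSpace G] (ρ : Measure G) [IsFiniteMeasure ρ]
    (w : G → ℝ → ℝ) (hw : Measurable (fun p : G × ℝ => w p.1 p.2))
    (hi : ∀ t, 0 ≤ t → Integrable (fun x => w x t) ρ)
    (hc : ContinuousOn (fun t => ∫ x, |w x t| ∂ρ) (Ici 0)) (t : ℝ) :
    Integrable (fun p : G × ℝ => w p.1 p.2) (ρ.prod (volume.restrict (Ioc 0 t))) := by
  rw [integrable_prod_iff' hw.aestronglyMeasurable]
  refine ⟨(ae_restrict_mem measurableSet_Ioc).mono fun s hs => hi s hs.1.le, ?_⟩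
  refine ((hc.mono (fun _ h => h.1 : Icc 0 t ⊆ Ici 0)).integrableOn_Icc).mono_set Ioc_subset_Icc_self

lemma nl_gronwall (φ : ℝ → ℝ) (hφ0 : ∀ t, 0 ≤ φ t) (hφ : ContinuousOn φ (Ici 0)) (C : ℝ)
    (hle : ∀ t, 0 ≤ t → φ t ≤ C * ∫ s in Ioc 0 t, φ s) : ∀ t, 0 ≤ t → φ t = 0 := by
  intro t ht
  have hψc : Continuous (fun t => φ (max t 0)) :=
    hφ.comp_continuous (by fun_prop) (fun x => mem_Ici.2 (le_max_right _ _))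
  have hΦ : ∀ r, 0 ≤ r → ∫ s in (0:ℝ)..r, φ (max s 0) = ∫ s in Ioc 0 r, φ s := by
    intro r hr
    rw [intervalIntegral.integral_of_le hr]
    refine setIntegral_congr_fun measurableSet_Ioc fun s hs => ?_
    simp only [max_eq_left hs.1.le]
  have hd : ∀ r, HasDerivAt (fun r => ∫ s in (0:ℝ)..r, φ (max s 0)) (φ (max r 0)) r :=
    fun r => (hψc.integral_hasStrictDerivAt 0 r).hasDerivAt
  have := norm_le_gronwallBound_of_norm_deriv_right_le (δ := 0) (K := C) (ε := 0) (a := 0) (b := t)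
    (f := fun r => ∫ s in (0:ℝ)..r, φ (max s 0)) (f' := fun r => φ (max r 0))
    (fun r _ => (hd r).continuousAt.continuousWithinAt)
    (fun r _ => (hd r).hasDerivWithinAt) (by simp) (fun r hr => by
      rw [hΦ r hr.1, max_eq_left hr.1, Real.norm_eq_abs, Real.norm_eq_abs, abs_of_nonneg (hφ0 r),
        abs_of_nonneg (integral_nonneg hφ0), add_zero]
      exact hle r hr.1) t ⟨ht, le_rfl⟩
  rw [gronwallBound_ε0, zero_mul, hΦ t ht] at this
  have h0 : ∫ s in Ioc 0 t, φ s = 0 := norm_le_zero_iff.1 this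
  have := hle t ht
  rw [h0, mul_zero] at this
  exact le_antisymm this (hφ0 t)

lemma nl_kint {G : Type*} [MeasurableSpace G] (μ : Measure G) (Ω F' : Set G)
    (K : G → G → ℝ) (hKsupp : ∀ x y, (x, y) ∉ Ω ×ˢ F' → K x y = 0)
    (u : G → ℝ → ℝ) (x : G) (s : ℝ) :
    ∫ y, K x y * (u y s - u x s) ∂μ = nlB (μ.restrict F') K u x s := by
  unfold nlB
  rw [setIntegral_eq_integral_of_forall_compl_eq_zero]
  intro y hy
  rw [hKsupp x y (fun h => hy h.2), zero_mul]

lemma nl_unique {G : Type*} [MeasurableSpace G] (μ : Measure G) (Ω F' : Set G)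
    (hΩm : MeasurableSet Ω)
    (hΩfin : μ Ω < ⊤) (hF'fin : μ F' < ⊤)
    (K : G → G → ℝ) (hKmeas : Measurable (fun p : G × G => K p.1 p.2))
    (hKnonneg : ∀ x y, 0 ≤ K x y)
    (hKsupp : ∀ x y, (x, y) ∉ Ω ×ˢ F' → K x y = 0)
    (M : ℝ) (hM : 0 < M) (hKle : ∀ x y, K x y ≤ M)
    (g : G → ℝ → ℝ) (c : ℝ) (hc : 0 ≤ c)
    (hgbdd : ∀ x t, |g x t| ≤ c)
    (u₀ : G → ℝ) (u u' : G → ℝ → ℝ) (hu : IsNonlocalSolution μ Ω K g u₀ u)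
    (hu' : IsNonlocalSolution μ Ω K g u₀ u') :
    ∀ t, 0 ≤ t → (fun x => u' x t) =ᵐ[μ.restrict Ω] fun x => u x t := by
  have : IsFiniteMeasure (μ.restrict F') := ⟨by simpa using hF'fin⟩
  have : IsFiniteMeasure (μ.restrict Ω) := ⟨by simpa using hΩfin⟩
  have slice : ∀ (u : G → ℝ → ℝ), Measurable (fun p : G × ℝ => u p.1 p.2) → ∀ s,
      Measurable (fun x => u x s) := fun u hu s => 
    hu.comp (g := fun p : G × ℝ => u p.1 p.2) (f := fun y => (y, s)) (by fun_prop)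
  have bnd : ∀ u, IsNonlocalSolution μ Ω K g u₀ u → ∀ s, 0 ≤ s →
      Integrable (fun x => |u x s|) (μ.restrict F') ∧
      ∫ x, |u x s| ∂(μ.restrict F') ≤ ∫ x in Ω, |u x s| ∂μ + c * μ.real F' := by
    intro u hu s hs
    refine nl_split μ Ω F' hΩm hF'fin (fun x => |u x s|) (slice u hu.1 s).abs
      (fun x => abs_nonneg _) (hu.2.2.1 s hs).abs c hc fun x hx => ?_
    rw [hu.2.1 x hx s hs]; exact hgbdd x s
  have intF : ∀ u, IsNonlocalSolution μ Ω K g u₀ u → ∀ s, 0 ≤ s →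
      Integrable (fun x => u x s) (μ.restrict F') := fun u hu s hs =>
    (integrable_norm_iff (slice u hu.1 s).aestronglyMeasurable).1 (bnd u hu s hs).1
  have tint : ∀ u, IsNonlocalSolution μ Ω K g u₀ u → ∀ t, ∀ᵐ x ∂(μ.restrict Ω),
      IntegrableOn (fun s => nlB (μ.restrict F') K u x s) (Ioc 0 t) := by
    intro u hu t
    have hcont := nl_L1cont (μ.restrict Ω) u hu.2.2.1 hu.2.2.2.1
    filter_upwards [(nl_prodint (μ.restrict Ω) u hu.1 hu.2.2.1 hcont t).prod_right_ae] with x hx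
    have hψ : IntegrableOn (fun s => ∫ x in Ω, |u x s| ∂μ) (Ioc 0 t) :=
      ((hcont.mono (fun _ h => h.1 : Icc 0 t ⊆ Ici 0)).integrableOn_Icc).mono_set Ioc_subset_Icc_self
    have hdom : IntegrableOn (fun s => M * (∫ x in Ω, |u x s| ∂μ + c * μ.real F')
        + M * (μ.restrict F').real univ * |u x s|) (Ioc 0 t) :=
      ((hψ.add (integrable_const _)).const_mul M).add (hx.abs.const_mul _)
    refine hdom.mono' ?_ ?_
    · exact ((nlB_meas (μ.restrict F') K hKmeas u hu.1).comp
        (g := fun p : G × ℝ => nlB (μ.restrict F') K u p.1 p.2)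
        (f := fun s => (x, s)) (by fun_prop)).aestronglyMeasurable
    · refine (ae_restrict_mem measurableSet_Ioc).mono fun s hs => ?_
      refine (nlB_bound (μ.restrict F') K hKnonneg M hKle u x s (fun y => |u y s|)
        (fun y => le_rfl) (bnd u hu s hs.1.le).1).trans ?_
      have := (bnd u hu s hs.1.le).2
      gcongr
  set w : G → ℝ → ℝ := fun x s => u' x s - u x s with hw
  have hwm : Measurable (fun p : G × ℝ => w p.1 p.2) := hu'.1.sub hu.1
  have hwi : ∀ t, 0 ≤ t → Integrable (fun x => w x t) (μ.restrict Ω) :=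
    fun t ht => (hu'.2.2.1 t ht).sub (hu.2.2.1 t ht)
  have hwc : ∀ s, 0 ≤ s → Filter.Tendsto (fun t => ∫ x in Ω, |w x t - w x s| ∂μ)
      (nhdsWithin s (Ici (0:ℝ))) (nhds 0) := by
    intro s hs
    have hsum := (hu'.2.2.2.1 s hs).add (hu.2.2.2.1 s hs)
    rw [add_zero] at hsum
    refine squeeze_zero' (Filter.Eventually.of_forall fun _ => integral_nonneg fun _ => abs_nonneg _)
      ?_ hsum
    filter_upwards [self_mem_nhdsWithin] with t ht
    have i1 : Integrable (fun x => |u' x t - u' x s|) (μ.restrict Ω) := ((hu'.2.2.1 t ht).sub (hu'.2.2.1 s hs)).abs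
    have i2 : Integrable (fun x => |u x t - u x s|) (μ.restrict Ω) := ((hu.2.2.1 t ht).sub (hu.2.2.1 s hs)).abs
    rw [← integral_add i1 i2]
    refine integral_mono ((hwi t ht).sub (hwi s hs)).abs (i1.add i2) fun x => ?_
    have : w x t - w x s = (u' x t - u' x s) - (u x t - u x s) := by simp only [hw]; ring
    simp only [this]
    exact abs_sub _ _
  have hcont := nl_L1cont (μ.restrict Ω) w hwi hwc
  set N := (μ.restrict F').real univ with hN
  have hN0 : 0 ≤ N := measureReal_nonneg
  set φ : ℝ → ℝ := fun t => ∫ x in Ω, |w x t| ∂μ with hφ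
  have hzero := nl_gronwall φ (fun t => integral_nonneg fun _ => abs_nonneg _) hcont
    (M * μ.real Ω + M * N) ?_
  · intro t ht
    have h0 := hzero t ht
    rw [hφ] at h0
    have := (integral_eq_zero_iff_of_nonneg (fun x => abs_nonneg (w x t)) (hwi t ht).abs).1 h0
    filter_upwards [this] with x hx
    have : w x t = 0 := abs_eq_zero.1 hx
    simp only [hw] at this
    linarith
  intro t ht
  have hφi : IntegrableOn φ (Ioc 0 t) :=
    ((hcont.mono (fun _ h => h.1 : Icc 0 t ⊆ Ici 0)).integrableOn_Icc).mono_set Ioc_subset_Icc_self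
  have hprod := nl_prodint (μ.restrict Ω) w hwm hwi hcont t
  have hpt : ∀ᵐ x ∂(μ.restrict Ω), |w x t| ≤ M * (∫ s in Ioc 0 t, φ s) +
      M * N * ∫ s in Ioc 0 t, |w x s| := by
    filter_upwards [hu.2.2.2.2 t ht, hu'.2.2.2.2 t ht, tint u hu t, tint u' hu' t,
      hprod.prod_right_ae] with x e e' i i' ix
    simp only [nl_kint μ Ω F' K hKsupp] at e e'
    rw [intervalIntegral.integral_of_le ht] at e e'
    have : w x t = ∫ s in Ioc 0 t, (nlB (μ.restrict F') K u' x s - nlB (μ.restrict F') K u x s) := by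
      rw [integral_sub i' i]; simp only [hw]; linarith
    rw [this, ← Real.norm_eq_abs, ← integral_const_mul, ← integral_const_mul,
      ← integral_add (hφi.const_mul M) (ix.abs.const_mul _)]
    refine norm_integral_le_of_norm_le ((hφi.const_mul M).add (ix.abs.const_mul _)) ?_
    refine (ae_restrict_mem measurableSet_Ioc).mono fun s hs => ?_
    have hs0 := hs.1.le
    rw [← nlB_sub (μ.restrict F') K hKmeas hKnonneg M hKle u' u x s (intF u' hu' s hs0)
      (intF u hu s hs0)]
    have hsp := nl_split μ Ω F' hΩm hF'fin (fun x => |w x s|) (slice w hwm s).abs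
      (fun x => abs_nonneg _) (hwi s hs0).abs 0 le_rfl (fun x hx => by
        simp only [hw]; rw [hu.2.1 x hx s hs0, hu'.2.1 x hx s hs0]; simp)
    refine (nlB_bound (μ.restrict F') K hKnonneg M hKle w x s (fun y => |w y s|)
        (fun y => le_rfl) hsp.1).trans ?_
    have := hsp.2
    rw [zero_mul, add_zero] at this
    gcongr
  have hI : Integrable (fun x => ∫ s in Ioc 0 t, |w x s|) (μ.restrict Ω) :=
    hprod.abs.integral_prod_left
  have hswap : ∫ x in Ω, (∫ s in Ioc 0 t, |w x s|) ∂μ = ∫ s in Ioc 0 t, φ s :=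
    integral_integral_swap (f := fun x s => |w x s|) hprod.abs
  calc φ t ≤ ∫ x in Ω, (M * (∫ s in Ioc 0 t, φ s) + M * N * ∫ s in Ioc 0 t, |w x s|) ∂μ :=
        integral_mono_ae (hwi t ht).abs ((integrable_const _).add (hI.const_mul _)) hpt
    _ = _ := by
        rw [integral_add (integrable_const _) (hI.const_mul _), integral_const, integral_const_mul,
          hswap]
        simp only [smul_eq_mul, measureReal_restrict_apply_univ]
        ring

/-- For every `u₀ ∈ L¹(Ω)` there exists a unique solution of the nonlocal
Dirichlet problem with data `(u₀, g)` (uniqueness in the `L¹(Ω)` sense, for each time). -/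
theorem stmt2 {G : Type*} [MeasurableSpace G] (μ : Measure G) (Ω F' : Set G)
    (hΩm : MeasurableSet Ω) (hF'm : MeasurableSet F')
    (hΩfin : μ Ω < ⊤) (hF'fin : μ F' < ⊤)
    (K : G → G → ℝ) (hKmeas : Measurable (fun p : G × G => K p.1 p.2))
    (hKnonneg : ∀ x y, 0 ≤ K x y)
    (hKsupp : ∀ x y, (x, y) ∉ Ω ×ˢ F' → K x y = 0)
    (M : ℝ) (hM : 0 < M) (hKle : ∀ x y, K x y ≤ M)
    (g : G → ℝ → ℝ) (hgmeas : Measurable (fun p : G × ℝ => g p.1 p.2))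
    (hgbdd : ∃ C, ∀ x t, |g x t| ≤ C)
    (u₀ : G → ℝ) (hu₀ : IntegrableOn u₀ Ω μ) :
    ∃ u, IsNonlocalSolution μ Ω K g u₀ u ∧
      ∀ u', IsNonlocalSolution μ Ω K g u₀ u' →
        ∀ t, 0 ≤ t → (fun x => u' x t) =ᵐ[μ.restrict Ω] fun x => u x t := by
  obtain ⟨c₀, hc₀⟩ := hgbdd
  obtain ⟨c, hc, hgc⟩ : ∃ c, 0 ≤ c ∧ ∀ x t, |g x t| ≤ c :=
    ⟨max c₀ 0, le_max_right _ _, fun x t => (hc₀ x t).trans (le_max_left _ _)⟩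
  have : IsFiniteMeasure (μ.restrict F') := ⟨by simpa using hF'fin⟩
  have : IsFiniteMeasure (μ.restrict Ω) := ⟨by simpa using hΩfin⟩
  obtain ⟨v₁, hv₁m, hv₁⟩ : ∃ v : G → ℝ, Measurable v ∧ u₀ =ᵐ[μ.restrict Ω] v :=
    ⟨_, hu₀.aestronglyMeasurable.stronglyMeasurable_mk.measurable,
      hu₀.aestronglyMeasurable.ae_eq_mk⟩
  have hv₁i : IntegrableOn v₁ Ω μ := (integrable_congr hv₁).1 hu₀
  set v := Ω.indicator v₁ with hv
  have hvm : Measurable v := hv₁m.indicator hΩm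
  have hvi : Integrable v μ := (integrable_indicator_iff hΩm).2 hv₁i
  set h : G → ℝ := fun x => |v x| + (1 + c) with hh
  have hhF : Integrable h (μ.restrict F') := hvi.restrict.abs.add (integrable_const _)
  have hhΩ : Integrable h (μ.restrict Ω) := hvi.restrict.abs.add (integrable_const _)
  have h1 : ∀ x, 1 ≤ h x := fun x => by simp only [hh]; linarith [abs_nonneg (v x)]
  set ν := μ.restrict F' with hν
  set C := M * ((∫ y, h y ∂ν) + ν.real univ) with hC
  have hC0 : 0 ≤ C := by
    have hI : 0 ≤ ∫ y, h y ∂ν := integral_nonneg fun y => by simpa using zero_le_one.trans (h1 y)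
    positivity
  obtain ⟨u, hum, ⟨A, hA⟩, hfix⟩ := nlT_fix ν Ω hΩm K hKmeas hKnonneg M hKle h hhF h1
    (2 * C + 1) (by linarith) (by linarith) g hgmeas v hvm
    (fun x => by simp only [hh]; linarith) (fun x t => by
      simp only [hh]; linarith [hgc x t, abs_nonneg (v x)])
  have hB := nlB_int ν K hKmeas hKnonneg M hKle h hhF h1 (2 * C + 1) u hum A hA
  have slice : ∀ s, Measurable (fun x => u x s) := fun s => 
    hum.comp (g := fun p : G × ℝ => u p.1 p.2) (f := fun y => (y, s)) (by fun_prop)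
  have hint : ∀ t, 0 ≤ t → IntegrableOn (fun x => u x t) Ω μ := fun t ht =>
    ((hhΩ.const_mul A).mul_const _).mono' (slice t).aestronglyMeasurable
      (Filter.Eventually.of_forall fun x => hA x t ht)
  have hform : ∀ x ∈ Ω, ∀ t, 0 ≤ t → u x t = v x + ∫ s in (0:ℝ)..t, nlB ν K u x s := by
    intro x hx t ht
    rw [hfix x t, intervalIntegral.integral_of_le ht]
    simp [nlT, hx, ht]
  have hsol : IsNonlocalSolution μ Ω K g u₀ u := by
    refine ⟨hum, ?_, hint, ?_, ?_⟩
    · intro x hx t ht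
      rw [hfix x t]; simp [nlT, hx]
    · intro s hs
      set l := 2 * C + 1
      have hl : 0 < l := by linarith
      have hbd : ∀ t, 0 ≤ t → t ≤ s + 1 → ∀ x ∈ Ω,
          |u x t - u x s| ≤ (C * A * h x * Real.exp (l * (s + 1))) * |t - s| := by
        intro t ht hts x hx
        have ii : ∀ t, 0 ≤ t → IntervalIntegrable (fun s => nlB ν K u x s) volume 0 t :=
          fun t ht => (intervalIntegrable_iff_integrableOn_Ioc_of_le ht).2 (hB.2 x 0 t le_rfl)
        rw [hform x hx t ht, hform x hx s hs, add_sub_add_left_eq_sub,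
          intervalIntegral.integral_interval_sub_left (ii t ht) (ii s hs), ← Real.norm_eq_abs]
        refine intervalIntegral.norm_integral_le_of_norm_le_const fun r hr => ?_
        rw [uIoc, mem_Ioc] at hr
        have hr0 : 0 ≤ r := (le_min hs ht).trans hr.1.le
        have hr1 : r ≤ s + 1 := hr.2.trans (max_le (by linarith) hts)
        have hb := hB.1 x r hr0
        have hnn : 0 ≤ C * A * h x :=
          nonneg_of_mul_nonneg_left ((abs_nonneg _).trans hb) (Real.exp_pos _)
        refine hb.trans ?_
        gcongr
      have hi : Integrable (fun x => C * A * h x * Real.exp (l * (s + 1))) (μ.restrict Ω) :=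
        (hhΩ.const_mul (C * A)).mul_const _
      have hz : Filter.Tendsto (fun t => (∫ x in Ω, C * A * h x * Real.exp (l * (s + 1)) ∂μ) * |t - s|)
          (nhdsWithin s (Ici (0:ℝ))) (nhds 0) := by
        have : Continuous (fun t => (∫ x in Ω, C * A * h x * Real.exp (l * (s + 1)) ∂μ) * |t - s|) := by
          fun_prop
        have := (this.tendsto s).mono_left (nhdsWithin_le_nhds (s := Ici (0:ℝ)))
        simpa using this
      refine squeeze_zero' (Filter.Eventually.of_forall fun _ =>
        integral_nonneg fun _ => abs_nonneg _) ?_ hz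
      filter_upwards [self_mem_nhdsWithin,
        nhdsWithin_le_nhds (Iic_mem_nhds (show s < s + 1 by linarith))] with t ht hts
      rw [← integral_mul_const]
      refine setIntegral_mono_on ((hint t ht).sub (hint s hs)).abs (hi.mul_const _) hΩm
        fun x hx => hbd t ht hts x hx
    · intro t ht
      filter_upwards [hv₁, ae_restrict_mem hΩm] with x hx hxΩ
      simp only [nl_kint μ Ω F' K hKsupp]
      rw [hform x hxΩ t ht, hx, hv, indicator_of_mem hxΩ]
  exact ⟨u, hsol, fun u' hu' => nl_unique μ Ω F' hΩm hΩfin hF'fin K hKmeas hKnonneg hKsupp M hM hKle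
    g c hc hgc u₀ u u' hsol hu'⟩
end

section
/- Let u ∈ C²(ℝⁿ) have bounded first and second derivatives and α-Hölder second derivatives with constant H. Then there exists a constant c, independent of ε, such that sup_{x ∈ ℝⁿ} |𝒦_ε u(x) − 𝒦u(x)| ≤ c ε^α for all 0 < ε ≤ 1, where 𝒦u(x) = Σ_{i,j=1}^{n} a_{ij}(x) ∂ᵢ∂ⱼu(x) + Σ_{i=1}^{n} bᵢ(x) ∂ᵢu(x). (This is the abelian instance of the paper's Lemma 5.2.) -/
open MeasureTheory Matrix Set

/-- First partial derivative `∂ᵢ f (x)`. -/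
noncomputable def pd1 {n : ℕ} (f : EuclideanSpace ℝ (Fin n) → ℝ)
    (x : EuclideanSpace ℝ (Fin n)) (i : Fin n) : ℝ :=
  fderiv ℝ f x (EuclideanSpace.single i 1)

/-- Second partial derivative `∂ᵢ∂ⱼ f (x)`. -/
noncomputable def pd2 {n : ℕ} (f : EuclideanSpace ℝ (Fin n) → ℝ)
    (x : EuclideanSpace ℝ (Fin n)) (i j : Fin n) : ℝ :=
  fderiv ℝ (fderiv ℝ f) x (EuclideanSpace.single i 1) (EuclideanSpace.single j 1)

/-- The Laplacian `Δf(x) = ∑ᵢ ∂ᵢ∂ᵢ f(x)`. -/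
noncomputable def lap {n : ℕ} (f : EuclideanSpace ℝ (Fin n) → ℝ)
    (x : EuclideanSpace ℝ (Fin n)) : ℝ :=
  ∑ i, pd2 f x i i

/-- Matrix acting on a Euclidean vector. -/
noncomputable def mvec {n : ℕ} (A : Matrix (Fin n) (Fin n) ℝ)
    (x : EuclideanSpace ℝ (Fin n)) : EuclideanSpace ℝ (Fin n) :=
  Matrix.toEuclideanLin A x

/-- The affine function `ã(w) = w₁ + ⋯ + w_n + M`. -/
noncomputable def atil {n : ℕ} (M : ℝ) (w : EuclideanSpace ℝ (Fin n)) : ℝ :=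
  (∑ i, w i) + M

/-- The matrix `E(x) = (M/2) W(x) A(x)⁻¹` with `W(x) = diag(b(x))`. -/
noncomputable def Emat {n : ℕ} (M : ℝ) (A : EuclideanSpace ℝ (Fin n) → Matrix (Fin n) (Fin n) ℝ)
    (b : EuclideanSpace ℝ (Fin n) → Fin n → ℝ) (x : EuclideanSpace ℝ (Fin n)) :
    Matrix (Fin n) (Fin n) ℝ :=
  (M / 2) • (Matrix.diagonal (b x) * (A x)⁻¹)

/-- The rescaled kernel
`K_ε(x,y) = (c(x)/ε^{n+2}) ã(−E(x)(x−y)) J(L(x)⁻¹(x−y)/ε)`,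
where `c(x) = 2/(C(J) M det(A(x))^{1/2})`. -/
noncomputable def Kker {n : ℕ} (J : EuclideanSpace ℝ (Fin n) → ℝ) (CJ M : ℝ)
    (A L : EuclideanSpace ℝ (Fin n) → Matrix (Fin n) (Fin n) ℝ)
    (b : EuclideanSpace ℝ (Fin n) → Fin n → ℝ)
    (ε : ℝ) (x y : EuclideanSpace ℝ (Fin n)) : ℝ :=
  2 / (CJ * M * Real.sqrt (A x).det) / ε ^ (n + 2) *
    atil M (-(mvec (Emat M A b x) (x - y))) *
    J (ε⁻¹ • mvec (L x)⁻¹ (x - y))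

/-- The rescaled nonlocal operator `𝒦_ε u(x) = ∫ K_ε(x,y)(u(y) − u(x)) dy`. -/
noncomputable def Kop {n : ℕ} (J : EuclideanSpace ℝ (Fin n) → ℝ) (CJ M : ℝ)
    (A L : EuclideanSpace ℝ (Fin n) → Matrix (Fin n) (Fin n) ℝ)
    (b : EuclideanSpace ℝ (Fin n) → Fin n → ℝ)
    (ε : ℝ) (u : EuclideanSpace ℝ (Fin n) → ℝ) (x : EuclideanSpace ℝ (Fin n)) : ℝ :=
  ∫ y, Kker J CJ M A L b ε x y * (u y - u x)

/-- The local operator `𝒦u(x) = ∑ᵢⱼ aᵢⱼ(x)∂ᵢ∂ⱼu(x) + ∑ᵢ bᵢ(x)∂ᵢu(x)`. -/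
noncomputable def Kloc {n : ℕ} (A : EuclideanSpace ℝ (Fin n) → Matrix (Fin n) (Fin n) ℝ)
    (b : EuclideanSpace ℝ (Fin n) → Fin n → ℝ)
    (u : EuclideanSpace ℝ (Fin n) → ℝ) (x : EuclideanSpace ℝ (Fin n)) : ℝ :=
  (∑ i, ∑ j, A x i j * pd2 u x i j) + ∑ i, b x i * pd1 u x i

section helpers

variable {n : ℕ}

lemma aux_expand (z : EuclideanSpace ℝ (Fin n)) :
    z = ∑ i, z i • EuclideanSpace.single i (1:ℝ) := by
  ext k
  simp [Finset.sum_apply, Pi.single_apply]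

lemma aux_lin (p : EuclideanSpace ℝ (Fin n) →ₗ[ℝ] ℝ) (z : EuclideanSpace ℝ (Fin n)) :
    p z = ∑ i, z i * p (EuclideanSpace.single i (1:ℝ)) := by
  conv_lhs => rw [aux_expand z]
  simp [map_sum]

lemma aux_bilin (B : EuclideanSpace ℝ (Fin n) →ₗ[ℝ] EuclideanSpace ℝ (Fin n) →ₗ[ℝ] ℝ)
    (z w : EuclideanSpace ℝ (Fin n)) :
    B z w = ∑ i, ∑ j, (z i * w j) *
      B (EuclideanSpace.single i (1:ℝ)) (EuclideanSpace.single j (1:ℝ)) := by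
  have h := aux_lin (B.flip w) z
  simp only [LinearMap.flip_apply] at h
  rw [h]
  refine Finset.sum_congr rfl fun i _ => ?_
  rw [aux_lin (B _) w, Finset.mul_sum]
  refine Finset.sum_congr rfl fun j _ => ?_
  ring

/-- integrability of `J * h`, with `h` continuous -/
lemma aux_int {J h : EuclideanSpace ℝ (Fin n) → ℝ} (hJint : Integrable J)
    (hJcs : HasCompactSupport J) (hh : Continuous h) : Integrable (fun z => J z * h z) := by
  have h1 : IntegrableOn (fun z => J z * h z) (tsupport J) :=
    IntegrableOn.mul_continuousOn hJint.integrableOn hh.continuousOn hJcs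
  refine (integrableOn_iff_integrable_of_support_subset ?_).mp h1
  intro z hz
  apply subset_tsupport J
  intro h0
  apply hz
  simp [h0]

lemma aux_odd {F : EuclideanSpace ℝ (Fin n) → ℝ} (hF : ∀ z, F (-z) = - F z) :
    ∫ z, F z = 0 := by
  have h := integral_neg_eq_self F volume
  simp only [hF, integral_neg] at h
  linarith

lemma aux_mom {J : EuclideanSpace ℝ (Fin n) → ℝ} (hJint : Integrable J)
    (hJcs : HasCompactSupport J) (CJ : ℝ)
    (hJmom : ∀ i j : Fin n, ∫ x, J x * (x i * x j) = if i = j then CJ else 0)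
    (B : EuclideanSpace ℝ (Fin n) →ₗ[ℝ] EuclideanSpace ℝ (Fin n) →ₗ[ℝ] ℝ) :
    ∫ z, J z * B z z =
      CJ * ∑ k, B (EuclideanSpace.single k (1:ℝ)) (EuclideanSpace.single k (1:ℝ)) := by
  have h1 : ∀ z, J z * B z z = ∑ i, ∑ j, (J z * (z i * z j)) *
      B (EuclideanSpace.single i (1:ℝ)) (EuclideanSpace.single j (1:ℝ)) := by
    intro z
    rw [aux_bilin B z z, Finset.mul_sum]
    refine Finset.sum_congr rfl fun i _ => ?_
    rw [Finset.mul_sum]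
    refine Finset.sum_congr rfl fun j _ => ?_
    ring
  have hI : ∀ i j : Fin n, Integrable (fun z => (J z * (z i * z j)) *
      B (EuclideanSpace.single i (1:ℝ)) (EuclideanSpace.single j (1:ℝ))) := by
    intro i j
    exact (aux_int hJint hJcs (by fun_prop)).mul_const _
  simp only [h1]
  rw [integral_finsetSum _ (fun i _ => integrable_finsetSum _ (fun j _ => hI i j)),
    Finset.mul_sum]
  refine Finset.sum_congr rfl fun i _ => ?_
  rw [integral_finsetSum _ (fun j _ => hI i j)]
  simp only [integral_mul_const, hJmom]
  simp

/-- Taylor bound -/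
lemma aux_taylor {u : EuclideanSpace ℝ (Fin n) → ℝ} (hu : ContDiff ℝ 2 u)
    {H α : ℝ} (hα : 0 < α) (hH : 0 ≤ H)
    (huHolder : ∀ x y, ∀ i j : Fin n, |pd2 u x i j - pd2 u y i j| ≤ H * ‖x - y‖ ^ α)
    (x h : EuclideanSpace ℝ (Fin n)) :
    |u (x + h) - u x - fderiv ℝ u x h - 1 / 2 * fderiv ℝ (fderiv ℝ u) x h h| ≤
      (n:ℝ) ^ 2 * H * ‖h‖ ^ α * ‖h‖ ^ 2 := by
  set K := (n:ℝ) ^ 2 * H * ‖h‖ ^ α * ‖h‖ ^ 2 with hK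
  have hdu : Differentiable ℝ u := hu.differentiable (by norm_num)
  have hdu' : Differentiable ℝ (fderiv ℝ u) :=
    (hu.fderiv_right (m := 1) (by norm_num)).differentiable (by norm_num)
  have hline : ∀ t : ℝ, HasDerivAt (fun t : ℝ => x + t • h) h t := by
    intro t
    simpa using ((hasDerivAt_id t).smul_const h).const_add x
  have hφ : ∀ t : ℝ, HasDerivAt (fun t : ℝ => u (x + t • h)) (fderiv ℝ u (x + t • h) h) t := by
    intro t
    exact (hdu (x + t • h)).hasFDerivAt.comp_hasDerivAt t (hline t)
  have hφ' : ∀ t : ℝ, HasDerivAt (fun t : ℝ => fderiv ℝ u (x + t • h) h)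
      (fderiv ℝ (fderiv ℝ u) (x + t • h) h h) t := by
    intro t
    have := (hdu' (x + t • h)).hasFDerivAt.comp_hasDerivAt t (hline t)
    simpa using this.clm_apply (hasDerivAt_const t h)
  have hbd : ∀ t ∈ Icc (0:ℝ) 1,
      ‖fderiv ℝ (fderiv ℝ u) (x + t • h) h h - fderiv ℝ (fderiv ℝ u) x h h‖ ≤ K := by
    intro t ht
    let T : EuclideanSpace ℝ (Fin n) →L[ℝ] EuclideanSpace ℝ (Fin n) →L[ℝ] ℝ :=
      fderiv ℝ (fderiv ℝ u) (x + t • h) - fderiv ℝ (fderiv ℝ u) x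
    let B : EuclideanSpace ℝ (Fin n) →ₗ[ℝ] EuclideanSpace ℝ (Fin n) →ₗ[ℝ] ℝ :=
      (ContinuousLinearMap.coeLM ℝ).comp (T : _ →ₗ[ℝ] _)
    have hB : fderiv ℝ (fderiv ℝ u) (x + t • h) h h - fderiv ℝ (fderiv ℝ u) x h h = B h h := by
      simp [B, T]
    rw [hB, aux_bilin B h h]
    have hth : ‖t • h‖ ≤ ‖h‖ := by
      rw [norm_smul, Real.norm_eq_abs, abs_of_nonneg ht.1]
      exact mul_le_of_le_one_left (norm_nonneg _) ht.2
    have hterm : ∀ i j : Fin n, ‖(h i * h j) *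
      B (EuclideanSpace.single i (1:ℝ)) (EuclideanSpace.single j (1:ℝ))‖ ≤
        ‖h‖ ^ 2 * (H * ‖h‖ ^ α) := by
      intro i j
      have e1 : |B (EuclideanSpace.single i (1:ℝ)) (EuclideanSpace.single j (1:ℝ))| ≤
          H * ‖h‖ ^ α := by
        have e2 := huHolder (x + t • h) x i j
        have e3 : B (EuclideanSpace.single i (1:ℝ)) (EuclideanSpace.single j (1:ℝ)) =
          pd2 u (x + t • h) i j - pd2 u x i j := by
          simp [B, T, pd2]
        rw [e3]
        refine e2.trans ?_
        rw [add_sub_cancel_left]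
        gcongr
      have e4 : ‖h i‖ ≤ ‖h‖ := PiLp.norm_apply_le h i
      have e5 : ‖h j‖ ≤ ‖h‖ := PiLp.norm_apply_le h j
      rw [norm_mul, norm_mul, pow_two]
      gcongr
      exact e1
    calc _ ≤ ∑ i : Fin n, ∑ j : Fin n, ‖h‖ ^ 2 * (H * ‖h‖ ^ α) := by
          refine (norm_sum_le _ _).trans (Finset.sum_le_sum fun i _ => ?_)
          exact (norm_sum_le _ _).trans (Finset.sum_le_sum fun j _ => hterm i j)
      _ = K := by simp [hK]; ring
  have hK0 : 0 ≤ K := by positivity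
  have h1 : ∀ t ∈ Icc (0:ℝ) 1,
      ‖fderiv ℝ u (x + t • h) h - fderiv ℝ u x h - t * fderiv ℝ (fderiv ℝ u) x h h‖ ≤ K := by
    intro t ht
    have := Convex.norm_image_sub_le_of_norm_hasDerivWithin_le (s := Icc (0:ℝ) 1)
      (f := fun t : ℝ => fderiv ℝ u (x + t • h) h - t * fderiv ℝ (fderiv ℝ u) x h h)
      (f' := fun t => fderiv ℝ (fderiv ℝ u) (x + t • h) h h - fderiv ℝ (fderiv ℝ u) x h h)
      (C := K) (x := 0) (y := t)
      (fun s _ => ((hφ' s).sub (by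
        simpa using (hasDerivAt_id s).mul_const (fderiv ℝ (fderiv ℝ u) x h h))).hasDerivWithinAt)
      hbd (convex_Icc 0 1) (by simp) ht
    simp only [zero_smul, add_zero, zero_mul, sub_zero] at this
    have e : ‖t‖ ≤ 1 := by rw [Real.norm_eq_abs, abs_of_nonneg ht.1]; exact ht.2
    calc _ = _ := by congr 1; ring
      _ ≤ _ := this
      _ ≤ K * 1 := by gcongr
      _ = K := mul_one _
  have hsq : ∀ s : ℝ, HasDerivAt (fun t : ℝ => (1 / 2 * t ^ 2) * fderiv ℝ (fderiv ℝ u) x h h)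
      (s * fderiv ℝ (fderiv ℝ u) x h h) s := by
    intro s
    have e := ((hasDerivAt_pow 2 s).const_mul (1 / 2 : ℝ)).mul_const
      (fderiv ℝ (fderiv ℝ u) x h h)
    have e' : 1 / 2 * (((2 : ℕ) : ℝ) * s ^ (2 - 1)) * fderiv ℝ (fderiv ℝ u) x h h =
        s * fderiv ℝ (fderiv ℝ u) x h h := by
      have e2 : (2:ℕ) - 1 = 1 := rfl
      rw [e2, pow_one, Nat.cast_ofNat]
      ring
    rw [e'] at e
    exact e
  have := Convex.norm_image_sub_le_of_norm_hasDerivWithin_le (s := Icc (0:ℝ) 1)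
      (f := fun t : ℝ => u (x + t • h) - t * fderiv ℝ u x h
        - (1 / 2 * t ^ 2) * fderiv ℝ (fderiv ℝ u) x h h)
      (f' := fun t => fderiv ℝ u (x + t • h) h - fderiv ℝ u x h
        - t * fderiv ℝ (fderiv ℝ u) x h h)
      (C := K) (x := 0) (y := 1)
      (fun s _ => (((hφ s).sub (by
        simpa using (hasDerivAt_id s).mul_const (fderiv ℝ u x h))).sub (hsq s)).hasDerivWithinAt)
      h1 (convex_Icc 0 1) (by simp) (by simp)
  simp only [zero_smul, add_zero, zero_mul, sub_zero, one_smul, one_mul, norm_one, mul_one,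
    one_pow, Real.norm_eq_abs] at this
  refine le_trans (le_of_eq ?_) this
  congr 1
  norm_num
  ring

lemma aux_mvec_apply (A : Matrix (Fin n) (Fin n) ℝ) (z : EuclideanSpace ℝ (Fin n)) (i : Fin n) :
    mvec A z i = ∑ j, A i j * z j := by
  simp [mvec, Matrix.toLpLin_apply, Matrix.mulVec, dotProduct]

lemma aux_mvec_mul (A B : Matrix (Fin n) (Fin n) ℝ) (z : EuclideanSpace ℝ (Fin n)) :
    mvec A (mvec B z) = mvec (A * B) z := by
  simp [mvec, Matrix.toLpLin_apply]

lemma aux_mvec_norm (A L : Matrix (Fin n) (Fin n) ℝ) (h : A = L * Lᵀ)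
    (z : EuclideanSpace ℝ (Fin n)) :
    ‖mvec L z‖ ^ 2 ≤ (∑ i, A i i) * ‖z‖ ^ 2 := by
  rw [EuclideanSpace.real_norm_sq_eq, EuclideanSpace.real_norm_sq_eq, Finset.sum_mul]
  refine Finset.sum_le_sum fun i _ => ?_
  rw [aux_mvec_apply, h]
  refine (Finset.sum_mul_sq_le_sq_mul_sq _ _ _).trans (le_of_eq ?_)
  simp [Matrix.mul_apply, pow_two]

/-- change of variables -/
lemma aux_cov (L : Matrix (Fin n) (Fin n) ℝ) (hL : 0 < L.det) (ε : ℝ) (hε : 0 < ε)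
    (x : EuclideanSpace ℝ (Fin n)) (G : EuclideanSpace ℝ (Fin n) → ℝ) :
    ∫ y, G y = (ε ^ n * L.det) * ∫ z, G (x - ε • mvec L z) := by
  let f : EuclideanSpace ℝ (Fin n) →ₗ[ℝ] EuclideanSpace ℝ (Fin n) := ε • Matrix.toEuclideanLin L
  have hdet : LinearMap.det f = ε ^ n * L.det := by
    simp [f, LinearMap.det_smul, LinearMap.det_toLpLin]
  have hpos : 0 < ε ^ n * L.det := by positivity
  have hne : LinearMap.det f ≠ 0 := by rw [hdet]; exact hpos.ne'
  have hmap := Measure.map_linearMap_addHaar_eq_smul_addHaar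
    (volume : Measure (EuclideanSpace ℝ (Fin n))) hne
  let e := (LinearEquiv.ofIsUnitDet (f := f) (v := PiLp.basisFun 2 ℝ (Fin n))
    (v' := PiLp.basisFun 2 ℝ (Fin n)) (by
      rw [LinearMap.det_toMatrix]; exact hne.isUnit)).toContinuousLinearEquiv
  have hemb : MeasurableEmbedding f := e.toHomeomorph.measurableEmbedding
  have h1 := hemb.integral_map (μ := volume) (fun w => G (x - w))
  rw [hmap, integral_smul_measure, integral_sub_left_eq_self G volume x, hdet,
    ENNReal.toReal_ofReal (abs_nonneg _), abs_of_pos (inv_pos.mpr hpos), smul_eq_mul] at h1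
  have h2 : ∫ z, G (x - ε • mvec L z) = ∫ z, G (x - f z) := rfl
  rw [h2, ← h1, ← mul_assoc, mul_inv_cancel₀ hpos.ne', one_mul]

end helpers
/-- The rescaled nonlocal operator `𝒦_ε` approximates the local operator `𝒦` at rate `ε^α`. -/
theorem stmt8 (n : ℕ) (hn : 1 ≤ n)
    (J : EuclideanSpace ℝ (Fin n) → ℝ) (hJint : Integrable J)
    (hJcs : HasCompactSupport J) (hJ0 : ∀ x, 0 ≤ J x) (hJeven : ∀ x, J (-x) = J x)
    (CJ : ℝ) (hCJ : 0 < CJ)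
    (hJmom : ∀ i j : Fin n, ∫ x, J x * (x i * x j) = if i = j then CJ else 0)
    (α : ℝ) (hα : α ∈ Ioc (0:ℝ) 1) (H : ℝ) (hH : 0 ≤ H)
    (A : EuclideanSpace ℝ (Fin n) → Matrix (Fin n) (Fin n) ℝ)
    (hAsymm : ∀ x, (A x).IsSymm) (hApos : ∀ x, (A x).PosDef)
    (hAsmooth : ∀ i j : Fin n, ContDiff ℝ (⊤ : ℕ∞) (fun x => A x i j))
    (hAbdd : ∀ i j : Fin n, ∀ k : ℕ, ∃ C, ∀ x,
      ‖iteratedFDeriv ℝ k (fun y => A y i j) x‖ ≤ C)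
    (θ : ℝ) (hθ : 0 < θ)
    (hell : ∀ x, ∀ ξ : Fin n → ℝ, θ * ∑ i, ξ i ^ 2 ≤ ∑ i, ∑ j, A x i j * ξ i * ξ j)
    (L : EuclideanSpace ℝ (Fin n) → Matrix (Fin n) (Fin n) ℝ)
    (hChol : ∀ x, A x = L x * (L x)ᵀ)
    (hLtri : ∀ x, ∀ i j : Fin n, i < j → L x i j = 0)
    (hLdiag : ∀ x, ∀ i : Fin n, 0 < L x i i)
    (b : EuclideanSpace ℝ (Fin n) → Fin n → ℝ)
    (hbsmooth : ∀ i : Fin n, ContDiff ℝ (⊤ : ℕ∞) (fun x => b x i))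
    (hbbdd : ∃ C, ∀ x, ∀ i : Fin n, |b x i| ≤ C)
    (M : ℝ) (hM : 0 < M)
    (β : ℝ) (hβ : 0 < β)
    (hbeta : ∀ x, ∀ z ∈ tsupport J, ∀ ε ∈ Ioc (0:ℝ) 1,
      β ≤ atil M (-(ε • mvec (Emat M A b x) (mvec (L x) z))))
    (u : EuclideanSpace ℝ (Fin n) → ℝ) (hu : ContDiff ℝ 2 u)
    (hubdd : ∃ C, ∀ x, ‖fderiv ℝ u x‖ ≤ C ∧ ‖fderiv ℝ (fderiv ℝ u) x‖ ≤ C)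
    (huHolder : ∀ x y, ∀ i j : Fin n, |pd2 u x i j - pd2 u y i j| ≤ H * ‖x - y‖ ^ α) :
    ∃ c : ℝ, ∀ ε ∈ Ioc (0:ℝ) 1, ∀ x,
      |Kop J CJ M A L b ε u x - Kloc A b u x| ≤ c * ε ^ α := by
  obtain ⟨hα0, hα1⟩ := hα
  -- bound on the image of the support
  obtain ⟨r, hr0, hr⟩ : ∃ r : ℝ, 0 ≤ r ∧ ∀ z ∈ tsupport J, ‖z‖ ≤ r := by
    obtain ⟨r, hr⟩ := hJcs.isCompact.isBounded.exists_norm_le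
    exact ⟨max r 0, le_max_right _ _, fun z hz => (hr z hz).trans (le_max_left _ _)⟩
  obtain ⟨ρ, hρ0, hρ⟩ : ∃ ρ : ℝ, 0 ≤ ρ ∧ ∀ x, ∀ z ∈ tsupport J, ‖mvec (L x) z‖ ≤ ρ := by
    choose C hC using fun i : Fin n => hAbdd i i 0
    refine ⟨Real.sqrt (∑ i, C i) * r, by positivity, fun x z hz => ?_⟩
    have hAC : ∀ i, A x i i ≤ C i := by
      intro i
      have := hC i x
      rw [norm_iteratedFDeriv_zero, Real.norm_eq_abs] at this
      exact (le_abs_self _).trans this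
    have hS : ∑ i, A x i i ≤ ∑ i, C i := Finset.sum_le_sum fun i _ => hAC i
    have hS0 : 0 ≤ ∑ i, C i := by
      refine le_trans ?_ hS
      exact Finset.sum_nonneg fun i _ => (hApos x).diag_pos.le
    refine abs_le_of_sq_le_sq' ?_ (by positivity) |>.2
    rw [mul_pow, Real.sq_sqrt hS0]
    refine (aux_mvec_norm (A x) (L x) (hChol x) z).trans ?_
    have := hr z hz
    gcongr
  refine ⟨2 / (CJ * M) * (2 * M * ((n:ℝ) ^ 2 * H * ρ ^ α * ρ ^ 2) * ∫ z, J z), ?_⟩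
  rintro ε ⟨hε0, hε1⟩ x
  -- determinants
  have hLdet : 0 < (L x).det := by
    rw [Matrix.det_of_lowerTriangular (L x) (fun i j hij => hLtri x i j (by simpa using hij))]
    exact Finset.prod_pos fun i _ => hLdiag x i
  have hsqrt : Real.sqrt (A x).det = (L x).det := by
    rw [hChol x, Matrix.det_mul, Matrix.det_transpose, Real.sqrt_mul_self hLdet.le]
  have hLunit : IsUnit (L x).det := hLdet.ne'.isUnit
  have hAunit : IsUnit (A x).det := by
    rw [hChol x, Matrix.det_mul, Matrix.det_transpose]; exact hLunit.mul hLunit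
  -- the linear maps
  let Lm : EuclideanSpace ℝ (Fin n) →ₗ[ℝ] EuclideanSpace ℝ (Fin n) := Matrix.toEuclideanLin (L x)
  have hLm : ∀ z, mvec (L x) z = Lm z := fun z => rfl
  let g : EuclideanSpace ℝ (Fin n) →ₗ[ℝ] ℝ :=
    ∑ i, (EuclideanSpace.proj i : EuclideanSpace ℝ (Fin n) →L[ℝ] ℝ).toLinearMap ∘ₗ
      (Matrix.toEuclideanLin (Emat M A b x)) ∘ₗ Lm
  have hg : ∀ z, g z = ∑ i, mvec (Emat M A b x) (mvec (L x) z) i := by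
    intro z
    simp [g, Lm, mvec]
  let d1 : EuclideanSpace ℝ (Fin n) →ₗ[ℝ] ℝ := (fderiv ℝ u x).toLinearMap ∘ₗ Lm
  let D0 : EuclideanSpace ℝ (Fin n) →ₗ[ℝ] EuclideanSpace ℝ (Fin n) →ₗ[ℝ] ℝ :=
    (ContinuousLinearMap.coeLM ℝ).comp (fderiv ℝ (fderiv ℝ u) x).toLinearMap
  let d2 : EuclideanSpace ℝ (Fin n) →ₗ[ℝ] EuclideanSpace ℝ (Fin n) →ₗ[ℝ] ℝ :=
    D0.compl₁₂ Lm Lm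
  have hd1 : ∀ z, d1 z = fderiv ℝ u x (Lm z) := fun z => rfl
  have hd2 : ∀ z w, d2 z w = fderiv ℝ (fderiv ℝ u) x (Lm z) (Lm w) := fun z w => rfl
  have hatil : ∀ z, atil M (-(mvec (Emat M A b x) (ε • mvec (L x) z))) = M - ε * g z := by
    intro z
    rw [hg, atil, Finset.mul_sum]
    simp only [mvec, map_smul]
    simp
    ring
  have hatil' : ∀ z, atil M (-(ε • mvec (Emat M A b x) (mvec (L x) z))) = M - ε * g z := by
    intro z
    rw [← hatil]
    simp only [mvec, map_smul]
  -- change of variables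
  have hKop : Kop J CJ M A L b ε u x = 2 / (CJ * M) / ε ^ 2 *
      ∫ z, J z * ((M - ε * g z) * (u (x - ε • Lm z) - u x)) := by
    rw [Kop, aux_cov (L x) hLdet ε hε0 x, ← integral_const_mul, ← integral_const_mul]
    congr 1
    funext z
    have e1 : ε⁻¹ • mvec (L x)⁻¹ (x - (x - ε • mvec (L x) z)) = z := by
      rw [sub_sub_cancel]
      have : mvec (L x)⁻¹ (ε • mvec (L x) z) = ε • mvec (L x)⁻¹ (mvec (L x) z) := by
        simp only [mvec, map_smul]
      rw [this, aux_mvec_mul, Matrix.nonsing_inv_mul _ hLunit, smul_smul,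
        inv_mul_cancel₀ hε0.ne', one_smul]
      simp [mvec]
    rw [Kker, e1, sub_sub_cancel, hatil, hsqrt, hLm, pow_add]
    field_simp
  -- the main (polynomial) part
  have hgc : Continuous g := g.continuous_of_finiteDimensional
  have hd1c : Continuous d1 := d1.continuous_of_finiteDimensional
  have hLmc : Continuous Lm := Lm.continuous_of_finiteDimensional
  have hd2c : Continuous (fun z => d2 z z) := by
    simp only [hd2]
    exact ((fderiv ℝ (fderiv ℝ u) x).continuous.comp hLmc).clm_apply hLmc
  have huc : Continuous u := hu.continuous
  let P : EuclideanSpace ℝ (Fin n) → ℝ := fun z =>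
    (M - ε * g z) * (-(ε * d1 z) + ε ^ 2 / 2 * d2 z z)
  have hPc : Continuous P := by
    exact (continuous_const.sub (hgc.const_mul ε)).mul
      ((hd1c.const_mul ε).neg.add (hd2c.const_mul (ε ^ 2 / 2)))
  let Q : EuclideanSpace ℝ (Fin n) → ℝ := fun z =>
    (M - ε * g z) * (u (x - ε • Lm z) - u x)
  have hQc : Continuous Q := by
    simp only [Q]
    fun_prop
  have hPint : ∫ z, J z * P z = ε ^ 2 * (CJ * M / 2) * Kloc A b u x := by
    let B1 : EuclideanSpace ℝ (Fin n) →ₗ[ℝ] EuclideanSpace ℝ (Fin n) →ₗ[ℝ] ℝ :=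
      (LinearMap.mul ℝ ℝ).compl₁₂ g d1
    have hB1 : ∀ z w, B1 z w = g z * d1 w := fun z w => rfl
    have hodd : ∫ z, J z * (-(M * ε) * d1 z - ε ^ 3 / 2 * (g z * d2 z z)) = 0 := by
      apply aux_odd
      intro z
      simp only [hJeven, map_neg, LinearMap.neg_apply]
      ring
    have hsplit : ∀ z, J z * P z = J z * (-(M * ε) * d1 z - ε ^ 3 / 2 * (g z * d2 z z)) +
        (ε ^ 2 * (J z * B1 z z) + ε ^ 2 * (M / 2) * (J z * d2 z z)) := by
      intro z
      simp only [P, hB1]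
      ring
    have hi1 : Integrable (fun z => J z * B1 z z) := by
      apply aux_int hJint hJcs
      simp only [hB1]
      fun_prop
    have hi2 : Integrable (fun z => J z * d2 z z) := aux_int hJint hJcs hd2c
    have hi3 : Integrable (fun z => J z * (-(M * ε) * d1 z - ε ^ 3 / 2 * (g z * d2 z z))) := by
      apply aux_int hJint hJcs
      exact (hd1c.const_mul _).sub ((hgc.mul hd2c).const_mul _)
    simp only [hsplit]
    have hi4 : Integrable (fun z => ε ^ 2 * (J z * B1 z z) + ε ^ 2 * (M / 2) * (J z * d2 z z)) :=
      (hi1.const_mul _).add (hi2.const_mul _)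
    rw [integral_add hi3 hi4, hodd, integral_add (hi1.const_mul _) (hi2.const_mul _), integral_const_mul, integral_const_mul,
      aux_mom hJint hJcs CJ hJmom B1, aux_mom hJint hJcs CJ hJmom d2]
    have hLe : ∀ j k, Lm (EuclideanSpace.single k (1:ℝ)) j = L x j k := by
      intro j k
      rw [← hLm, aux_mvec_apply]
      simp [Pi.single_apply]
    have hs2 : ∑ k, d2 (EuclideanSpace.single k (1:ℝ)) (EuclideanSpace.single k (1:ℝ)) =
        ∑ i, ∑ j, A x i j * pd2 u x i j := by
      have e : ∀ k, d2 (EuclideanSpace.single k (1:ℝ)) (EuclideanSpace.single k (1:ℝ)) =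
          ∑ i, ∑ j, (L x i k * L x j k) * pd2 u x i j := by
        intro k
        have := aux_bilin D0 (Lm (EuclideanSpace.single k (1:ℝ)))
          (Lm (EuclideanSpace.single k (1:ℝ)))
        simp only [hLe] at this
        exact this
      simp only [e]
      rw [Finset.sum_comm]
      refine Finset.sum_congr rfl fun i _ => ?_
      rw [Finset.sum_comm]
      refine Finset.sum_congr rfl fun j _ => ?_
      rw [← Finset.sum_mul, hChol x]
      simp [Matrix.mul_apply]
    have hs1 : ∑ k, B1 (EuclideanSpace.single k (1:ℝ)) (EuclideanSpace.single k (1:ℝ)) =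
        M / 2 * ∑ i, b x i * pd1 u x i := by
      have e : ∀ k, B1 (EuclideanSpace.single k (1:ℝ)) (EuclideanSpace.single k (1:ℝ)) =
          ∑ i, ∑ j, ((Emat M A b x * L x) i k * L x j k) * pd1 u x j := by
        intro k
        have e1 := aux_lin (fderiv ℝ u x).toLinearMap (Lm (EuclideanSpace.single k (1:ℝ)))
        simp only [hLe] at e1
        rw [hB1, hg, Finset.sum_mul]
        refine Finset.sum_congr rfl fun i _ => ?_
        have e2 : d1 (EuclideanSpace.single k (1:ℝ)) = ∑ j, L x j k * pd1 u x j := e1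
        rw [e2, Finset.mul_sum, aux_mvec_mul, aux_mvec_apply]
        refine Finset.sum_congr rfl fun j _ => ?_
        simp [Pi.single_apply]
        ring
      have hEA : Emat M A b x * L x * (L x)ᵀ = (M / 2) • Matrix.diagonal (b x) := by
        rw [Matrix.mul_assoc, ← hChol x, Emat, Matrix.smul_mul, Matrix.mul_assoc,
          Matrix.nonsing_inv_mul _ hAunit, Matrix.mul_one]
      simp only [e]
      rw [Finset.sum_comm, Finset.mul_sum]
      refine Finset.sum_congr rfl fun i _ => ?_
      rw [Finset.sum_comm]
      have e3 : ∀ j, ∑ k, ((Emat M A b x * L x) i k * L x j k) * pd1 u x j =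
          ((M / 2) • Matrix.diagonal (b x)) i j * pd1 u x j := by
        intro j
        rw [← Finset.sum_mul, ← hEA, Matrix.mul_apply]
        simp [Matrix.transpose_apply]
      simp only [e3]
      simp [Matrix.diagonal_apply]
      ring
    rw [hs1, hs2, Kloc]
    ring
  -- the remainder
  have hneg : ∀ z ∈ tsupport J, -z ∈ tsupport J := by
    intro z hz
    have : J ∘ (Homeomorph.neg (EuclideanSpace ℝ (Fin n))) = J := by
      funext w; exact hJeven w
    rw [← this, tsupport_comp_eq_preimage]
    simpa using hz
  have hab : ∀ z ∈ tsupport J, |M - ε * g z| ≤ 2 * M := by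
    intro z hz
    have h1 := hbeta x z hz ε ⟨hε0, hε1⟩
    have h2 := hbeta x (-z) (hneg z hz) ε ⟨hε0, hε1⟩
    rw [hatil'] at h1 h2
    rw [map_neg] at h2
    rw [abs_le]
    constructor <;> nlinarith
  set T := (n:ℝ) ^ 2 * H * ρ ^ α * ρ ^ 2 with hT
  have hT0 : 0 ≤ T := by positivity
  have hrem : ∀ z, ‖J z * Q z - J z * P z‖ ≤ J z * (2 * M * (T * (ε ^ α * ε ^ 2))) := by
    intro z
    by_cases hz : z ∈ tsupport J
    · have h1 := aux_taylor hu hα0 hH huHolder x (-(ε • Lm z))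
      have h2 : ‖-(ε • Lm z)‖ ≤ ε * ρ := by
        rw [norm_neg, norm_smul, Real.norm_eq_abs, abs_of_pos hε0]
        exact mul_le_mul_of_nonneg_left (hρ x z hz) hε0.le
      have h3 : (n:ℝ) ^ 2 * H * ‖-(ε • Lm z)‖ ^ α * ‖-(ε • Lm z)‖ ^ 2 ≤ T * (ε ^ α * ε ^ 2) := by
        calc _ ≤ (n:ℝ) ^ 2 * H * (ε * ρ) ^ α * (ε * ρ) ^ 2 := by gcongr
          _ = _ := by rw [Real.mul_rpow hε0.le hρ0, hT]; ring
      have h4 : J z * Q z - J z * P z = J z * ((M - ε * g z) *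
          (u (x + -(ε • Lm z)) - u x - fderiv ℝ u x (-(ε • Lm z))
            - 1 / 2 * fderiv ℝ (fderiv ℝ u) x (-(ε • Lm z)) (-(ε • Lm z)))) := by
        simp only [Q, P, hd1, hd2, map_neg, map_smul, ContinuousLinearMap.neg_apply,
          ContinuousLinearMap.smul_apply, smul_eq_mul, ← sub_eq_add_neg]
        ring
      rw [h4, norm_mul, norm_mul, Real.norm_eq_abs, Real.norm_eq_abs, Real.norm_eq_abs,
        abs_of_nonneg (hJ0 z)]
      have := hab z hz
      have := hJ0 z
      have := h1.trans h3
      gcongr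
    · have : J z = 0 := image_eq_zero_of_notMem_tsupport hz
      simp [this]
  have hbound : |(∫ z, J z * Q z) - ∫ z, J z * P z| ≤
      (∫ z, J z) * (2 * M * (T * (ε ^ α * ε ^ 2))) := by
    rw [← integral_sub (aux_int hJint hJcs hQc) (aux_int hJint hJcs hPc), ← integral_mul_const]
    exact norm_integral_le_of_norm_le (hJint.mul_const _) (Filter.Eventually.of_forall hrem)
  have hfin : Kop J CJ M A L b ε u x - Kloc A b u x = 2 / (CJ * M) / ε ^ 2 *
      ((∫ z, J z * Q z) - ∫ z, J z * P z) := by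
    rw [hKop, hPint]
    simp only [Q]
    field_simp
  have hpos : 0 < 2 / (CJ * M) / ε ^ 2 := by positivity
  rw [hfin, abs_mul, abs_of_pos hpos]
  refine (mul_le_mul_of_nonneg_left hbound hpos.le).trans (le_of_eq ?_)
  field_simp
end
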